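/- For every integer n ≥ 2: (i) Topological(2^n) holds and Leaves(2^n) = n, i.e. 2^n is the Matula number of the star K_{1,n}; and (ii) for every positive integer m with Topological(m) and Leaves(m) = n, one has m ≥ 2^n. In other words, the star K_{1,n} (a root with n leaves attached to it) has the smallest Matula number among all topological trees with n leaves, and M(K_{1,n}) = 2^n. -/

import Mathlib

/-- `nthPrime m` is the `m`-th prime number in ascending order (1-indexed):
`nthPrime 1 = 2`, `nthPrime 2 = 3`, `nthPrime 3 = 5`, `nthPrime 4 = 7`, ... -/
noncomputable def nthPrime (m : ℕ) : ℕ := Nat.nth Nat.Prime (m - 1)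

/-- `MatulaTopological n` says that `n` is the Matula number of a topological tree
(a rooted tree with no vertex of outdegree 1): `MatulaTopological 1` holds, and for
`n > 1`, `MatulaTopological n` holds iff `n` has at least two prime factors counted
with multiplicity and `MatulaTopological m` holds for every positive `m` such that the
prime `nthPrime m` divides `n`.  (Since `nthPrime m ∣ n` forces `m < n`, this
recursion is well-founded, so the inductive predicate is its unique fixed point.) -/
inductive MatulaTopological : ℕ → Prop
  | one : MatulaTopological 1
  | node (n : ℕ) (hn : 1 < n) (hbranches : 2 ≤ n.primeFactorsList.length)
      (hrec : ∀ m : ℕ, 1 ≤ m → nthPrime m ∣ n → MatulaTopological m) :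
      MatulaTopological n

/-- `MatulaBinary n` says that `n` is the Matula number of a binary tree (every vertex
has outdegree 0 or 2): `MatulaBinary 1` holds, and for `n > 1`, `MatulaBinary n` holds
iff `n = nthPrime a * nthPrime b` for some positive `a`, `b` with `MatulaBinary a`
and `MatulaBinary b`. -/
inductive MatulaBinary : ℕ → Prop
  | one : MatulaBinary 1
  | node (a b : ℕ) (ha : 1 ≤ a) (hb : 1 ≤ b)
      (hA : MatulaBinary a) (hB : MatulaBinary b) :
      MatulaBinary (nthPrime a * nthPrime b)

lemma count_prime_add_two_le (t : ℕ) (ht : 2 ≤ t) : Nat.count Nat.Prime t + 2 ≤ t := by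
  induction t, ht using Nat.le_induction with
  | base =>
      simp [Nat.count_succ, Nat.count_zero]
      exact ⟨Nat.not_prime_zero, Nat.not_prime_one⟩
  | succ n hn ih =>
      have : Nat.count Nat.Prime (n + 1) ≤ Nat.count Nat.Prime n + 1 := by
        rw [Nat.count_succ]; split <;> omega
      omega

/-- `matulaLeaves n` is the number of leaves of the rooted tree with Matula number `n`:
`matulaLeaves 1 = 1`, and if `n > 1` has multiset of prime factors
`nthPrime m₁, …, nthPrime m_r` (counted with multiplicity), then
`matulaLeaves n = matulaLeaves m₁ + ⋯ + matulaLeaves m_r`.  Here the 1-indexed prime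
index of a prime factor `t` is recovered as `Nat.count Nat.Prime t + 1`, since
`nthPrime (Nat.count Nat.Prime t + 1) = Nat.nth Nat.Prime (Nat.count Nat.Prime t) = t`
for prime `t`. -/
def matulaLeaves (n : ℕ) : ℕ :=
  if n ≤ 1 then 1
  else (n.primeFactorsList.attach.map
    (fun t => matulaLeaves (Nat.count Nat.Prime t.1 + 1))).sum
decreasing_by
  rename_i hn
  have hmem := t.2
  have hp : (t : ℕ).Prime := Nat.prime_of_mem_primeFactorsList hmem
  have hdvd : (t : ℕ) ∣ n := Nat.dvd_of_mem_primeFactorsList hmem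
  have hle : (t : ℕ) ≤ n := Nat.le_of_dvd (by omega) hdvd
  have := count_prime_add_two_le t.1 hp.two_le
  omega

/-!
Merging the roots of two nontrivial trees multiplies Matula numbers and adds leaf counts, while
hanging a tree below a new root replaces its Matula number `k` by `nthPrime k` and keeps its leaves.
Hence `2 ^ matulaLeaves m ≤ m` for all `m > 1`, by strong induction: the bound is multiplicative,
and at a prime either `m = nthPrime 1 = 2`, with one leaf, or `m = nthPrime k` with `1 < k < m` and
the bound at `k` suffices.
-/

lemma nthPrime_prime (m : ℕ) : (nthPrime m).Prime :=
  Nat.prime_nth_prime (m - 1)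

lemma nthPrime_one : nthPrime 1 = 2 :=
  Nat.nth_prime_zero_eq_two

lemma lt_nthPrime (m : ℕ) : m < nthPrime m := by
  have hle : m - 1 + 2 ≤ nthPrime m := Nat.add_two_le_nth_prime (m - 1)
  omega

lemma count_nthPrime_add_one {m : ℕ} (hm : 1 ≤ m) :
    Nat.count Nat.Prime (nthPrime m) + 1 = m := by
  rw [nthPrime, Nat.count_nth_of_infinite Nat.infinite_setOfPred_prime, Nat.sub_add_cancel hm]

lemma nthPrime_injOn : Set.InjOn nthPrime (Set.Ici 1) := fun a ha b hb h => by
  rw [← count_nthPrime_add_one ha, h, count_nthPrime_add_one hb]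

lemma exists_nthPrime_eq {p : ℕ} (hp : p.Prime) : ∃ m, 1 ≤ m ∧ nthPrime m = p :=
  ⟨Nat.count Nat.Prime p + 1, Nat.le_add_left 1 _, Nat.nth_count hp⟩

lemma MatulaTopological.one_le {m : ℕ} (hm : MatulaTopological m) : 1 ≤ m := by
  cases hm with
  | one => exact le_rfl
  | node _ hm => exact hm.le

lemma MatulaTopological.nthPrime_pow {m k : ℕ} (hm : MatulaTopological m) (hk : 2 ≤ k) :
    MatulaTopological (nthPrime m ^ k) := by
  have hp : (nthPrime m).Prime := nthPrime_prime m
  refine .node _ (Nat.one_lt_pow (by omega) hp.one_lt) ?_ fun j hj hdvd => ?_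
  · rwa [hp.primeFactorsList_pow, List.length_replicate]
  · have hjm : nthPrime j = nthPrime m :=
      (Nat.prime_dvd_prime_iff_eq (nthPrime_prime j) hp).1 ((nthPrime_prime j).dvd_of_dvd_pow hdvd)
    rwa [nthPrime_injOn hj hm.one_le hjm]

lemma matulaLeaves_one : matulaLeaves 1 = 1 := by
  rw [matulaLeaves, if_pos le_rfl]

lemma matulaLeaves_eq_sum_primeFactorsList {n : ℕ} (hn : 1 < n) :
    matulaLeaves n =
      (n.primeFactorsList.map fun p => matulaLeaves (Nat.count Nat.Prime p + 1)).sum := by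
  rw [matulaLeaves, if_neg hn.not_ge]
  exact congrArg List.sum (List.attach_map_val (l := n.primeFactorsList)
    (f := fun p => matulaLeaves (Nat.count Nat.Prime p + 1)))

lemma matulaLeaves_nthPrime {m : ℕ} (hm : 1 ≤ m) :
    matulaLeaves (nthPrime m) = matulaLeaves m := by
  rw [matulaLeaves_eq_sum_primeFactorsList (nthPrime_prime m).one_lt,
    Nat.primeFactorsList_prime (nthPrime_prime m), List.map_singleton, List.sum_singleton,
    count_nthPrime_add_one hm]

lemma matulaLeaves_mul {a b : ℕ} (ha : 1 < a) (hb : 1 < b) :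
    matulaLeaves (a * b) = matulaLeaves a + matulaLeaves b := by
  have hperm : (a * b).primeFactorsList.Perm (a.primeFactorsList ++ b.primeFactorsList) :=
    Nat.perm_primeFactorsList_mul (by omega) (by omega)
  rw [matulaLeaves_eq_sum_primeFactorsList (Right.one_lt_mul' ha hb),
    matulaLeaves_eq_sum_primeFactorsList ha, matulaLeaves_eq_sum_primeFactorsList hb,
    (hperm.map _).sum_eq, List.map_append, List.sum_append]

lemma matulaLeaves_pow {a k : ℕ} (ha : 1 < a) (hk : 1 ≤ k) :
    matulaLeaves (a ^ k) = k * matulaLeaves a := by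
  induction k, hk using Nat.le_induction with
  | base => rw [pow_one, one_mul]
  | succ k hk ih =>
    rw [pow_succ, matulaLeaves_mul (Nat.one_lt_pow (by omega) ha) ha, ih, Nat.succ_mul]

lemma two_pow_matulaLeaves_le {m : ℕ} (hm : 1 < m) : 2 ^ matulaLeaves m ≤ m := by
  induction m using Nat.strong_induction_on with
  | _ m ih =>
    by_cases hprime : m.Prime
    · obtain ⟨k, hk, rfl⟩ := exists_nthPrime_eq hprime
      rw [matulaLeaves_nthPrime hk]
      rcases hk.eq_or_lt with rfl | hk
      · rw [matulaLeaves_one, nthPrime_one, pow_one]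
      · exact (ih k (lt_nthPrime k) hk).trans (lt_nthPrime k).le
    · obtain ⟨a, b, ha, hb, rfl⟩ := (Nat.not_prime_iff_exists_mul_eq hm).1 hprime
      have ha₁ : 1 < a := by nlinarith
      have hb₁ : 1 < b := by nlinarith
      rw [matulaLeaves_mul ha₁ hb₁, pow_add]
      exact Nat.mul_le_mul (ih a ha ha₁) (ih b hb hb₁)

theorem star_minimizes_matula_general (n : ℕ) (hn : 2 ≤ n) :
    (MatulaTopological (2 ^ n) ∧ matulaLeaves (2 ^ n) = n) ∧
      ∀ m : ℕ, 1 ≤ m → matulaLeaves m = n → 2 ^ n ≤ m := by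
  refine ⟨⟨?_, ?_⟩, ?_⟩
  · rw [← nthPrime_one]
    exact MatulaTopological.one.nthPrime_pow hn
  · have leaves_two : matulaLeaves 2 = 1 := by
      rw [← nthPrime_one, matulaLeaves_nthPrime le_rfl, matulaLeaves_one]
    rw [matulaLeaves_pow one_lt_two (by omega), leaves_two, mul_one]
  · rintro m hm rfl
    have hm_ne_one : m ≠ 1 := by
      rintro rfl
      rw [matulaLeaves_one] at hn
      omega
    exact two_pow_matulaLeaves_le (by omega)

/-- For every `n ≥ 2`: (i) `2^n` is the Matula number of a topological tree with `n`
leaves (namely the star `K_{1,n}`), and (ii) every topological tree with `n` leaves has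
Matula number at least `2^n`.  That is, the star `K_{1,n}` has the smallest Matula number
among all topological trees with `n` leaves, and `M(K_{1,n}) = 2^n`. -/
theorem star_minimizes_matula (n : ℕ) (hn : 2 ≤ n) :
    (MatulaTopological (2 ^ n) ∧ matulaLeaves (2 ^ n) = n) ∧
      ∀ m : ℕ, 1 ≤ m → MatulaTopological m → matulaLeaves m = n → 2 ^ n ≤ m := by
  obtain ⟨star, minimal⟩ := star_minimizes_matula_general n hn
  exact ⟨star, fun m hm _ => minimal m hm⟩
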